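/- arXiv:2502.03267 — 2 statements merged into one kernel-verified Lean document; each statement's English description precedes it below -/
import Mathlib

section
/- Let n ≥ 1, let Ω be any subset of ℝⁿ, and let δ ∈ (0, n]. Then for every sequence (f_i)_{i≥1} of functions f_i : Ω → [0, ∞] (no measurability assumed), the Choquet integral is countably sublinear: ∫_Ω Σ_{i=1}^∞ f_i dH̃^δ_∞ ≤ Σ_{i=1}^∞ ∫_Ω f_i dH̃^δ_∞. -/
open MeasureTheory Set Metric Filter Topology
open scoped ENNReal

noncomputable section

/-- Euclidean space `ℝⁿ`. -/
abbrev En (n : ℕ) : Type := EuclideanSpace ℝ (Fin n)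

/-- The half-open dyadic cube `2^k (m + [0,1)ⁿ)`, `k : ℤ`, `m : ℤⁿ`. -/
def dyadicCube (n : ℕ) (k : ℤ) (m : Fin n → ℤ) : Set (En n) :=
  {x | ∀ i, (m i : ℝ) * 2 ^ k ≤ x i ∧ x i < ((m i : ℝ) + 1) * 2 ^ k}

/-- The `δ`-dimensional dyadic Hausdorff content `H̃^δ_∞`: the infimum of `Σ ℓ(Q_i)^δ`
over all countable collections of dyadic cubes whose union's interior covers `E`. -/
def dyadicContent (n : ℕ) (δ : ℝ) (E : Set (En n)) : ℝ≥0∞ :=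
  ⨅ (c : ℕ → ℤ × (Fin n → ℤ))
    (_ : E ⊆ interior (⋃ i, dyadicCube n (c i).1 (c i).2)),
    ∑' i, ENNReal.ofReal (((2 : ℝ) ^ (c i).1) ^ δ)

/-- The Choquet integral `∫_Ω f dH̃^δ_∞ := ∫_0^∞ H̃^δ_∞({x ∈ Ω : f x > t}) dt`
of a `[0,∞]`-valued function over `Ω ⊆ ℝⁿ`. -/
def choquetIntegral (n : ℕ) (δ : ℝ) (Ω : Set (En n)) (f : En n → ℝ≥0∞) : ℝ≥0∞ :=
  ∫⁻ t in Ioi (0 : ℝ), dyadicContent n δ {x | x ∈ Ω ∧ ENNReal.ofReal t < f x}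

/-- The Choquet integral `∫_Ω |f| dH̃^δ_∞` of a real-valued function. -/
def choquetIntegralAbs (n : ℕ) (δ : ℝ) (Ω : Set (En n)) (f : En n → ℝ) : ℝ≥0∞ :=
  choquetIntegral n δ Ω (fun x => ENNReal.ofReal |f x|)

/-- The Choquet integral `∫_Ω |f| dH̃^δ_∞` of an extended-real-valued function. -/
def choquetIntegralEAbs (n : ℕ) (δ : ℝ) (Ω : Set (En n)) (f : En n → EReal) : ℝ≥0∞ :=
  choquetIntegral n δ Ω (fun x => (f x).abs)

/-- The ball average `f^δ_{B(x,r)} := (1/H̃^δ_∞(B(x,r))) ∫_{B(x,r)} f dH̃^δ_∞`. -/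
def ballAvg (n : ℕ) (δ : ℝ) (f : En n → ℝ≥0∞) (x : En n) (r : ℝ) : ℝ≥0∞ :=
  choquetIntegral n δ (ball x r) f / dyadicContent n δ (ball x r)

/-- The Hausdorff-content centred maximal function `M^δ f(x)`. -/
def maximal (n : ℕ) (δ : ℝ) (f : En n → ℝ≥0∞) (x : En n) : ℝ≥0∞ :=
  ⨆ (r : ℝ) (_ : 0 < r), ballAvg n δ f x r

/-- `f^δ_*(x) := limsup_{r→0⁺} (1/H̃^δ_∞(B(x,r))) ∫_{B(x,r)} |f(y) − f(x)| dH̃^δ_∞(y)`. -/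
def lebDev (n : ℕ) (δ : ℝ) (f : En n → ℝ) (x : En n) : ℝ≥0∞ :=
  limsup (fun r : ℝ => choquetIntegralAbs n δ (ball x r) (fun y => f y - f x) /
    dyadicContent n δ (ball x r)) (𝓝[>] (0 : ℝ))

/-- `limsup_{r→0⁺} f^δ_{B(x,r)}` of the ball averages. -/
def limsupAvg (n : ℕ) (δ : ℝ) (f : En n → ℝ≥0∞) (x : En n) : ℝ≥0∞ :=
  limsup (fun r : ℝ => ballAvg n δ f x r) (𝓝[>] (0 : ℝ))

/-- `δ`-cost of a cube index. -/
def cst {n : ℕ} (δ : ℝ) (q : ℤ × (Fin n → ℤ)) : ℝ≥0∞ := ENNReal.ofReal (((2 : ℝ) ^ q.1) ^ δ)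

/-- index of the cube of generation `k` containing `x`. -/
def idx {n : ℕ} (x : En n) (k : ℤ) : Fin n → ℤ := fun i => ⌊x i / 2 ^ k⌋

lemma mem_cube_iff {n : ℕ} (x : En n) (k : ℤ) (m : Fin n → ℤ) :
    x ∈ dyadicCube n k m ↔ m = idx x k := by
  have h2 : (0 : ℝ) < 2 ^ k := by positivity
  simp only [dyadicCube, mem_ofPred_eq, idx, funext_iff]
  refine forall_congr' fun i => ?_
  rw [eq_comm, Int.floor_eq_iff, le_div_iff₀ h2, div_lt_iff₀ h2]

lemma idx_mono {n : ℕ} (x y : En n) (k j : ℤ) (hkj : k ≤ j) (h : idx x k = idx y k) :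
    idx x j = idx y j := by
  obtain ⟨d, rfl⟩ := Int.le.dest hkj
  have key : ∀ z : En n, ∀ i, idx z (k + d) i = idx z k i / ((2 ^ d : ℕ) : ℤ) := by
    intro z i
    simp only [idx]
    rw [← Int.floor_div_natCast]
    congr 1
    rw [zpow_add₀ (by norm_num)]
    push_cast
    rw [div_div]; simp
  funext i
  rw [key, key, h]

lemma cst_small {n : ℕ} (δ : ℝ) (hδ : 0 < δ) (ε : ℝ≥0∞) (hε : ε ≠ 0) :
    ∃ q : ℤ × (Fin n → ℤ), cst δ q ≤ ε := by
  have ht : Tendsto (fun k : ℕ => ENNReal.ofReal (((1/2 : ℝ) ^ k) ^ δ)) atTop (𝓝 0) := by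
    have h1 : Tendsto (fun k : ℕ => ((1/2 : ℝ) ^ k)) atTop (𝓝 0) :=
      tendsto_pow_atTop_nhds_zero_of_lt_one (by norm_num) (by norm_num)
    have h2 := h1.rpow_const (p := δ) (Or.inr hδ.le)
    rw [Real.zero_rpow hδ.ne'] at h2
    simpa using ENNReal.tendsto_ofReal h2
  obtain ⟨k, hk⟩ := (ht.eventually (ge_mem_nhds (pos_iff_ne_zero.2 hε))).exists
  refine ⟨(-(k : ℤ), 0), ?_⟩
  simpa [cst] using hk

lemma content_le {n : ℕ} (δ : ℝ) (hδ : 0 < δ) (F : Set (ℤ × (Fin n → ℤ))) (E : Set (En n))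
    (hE : IsOpen E) (h : ∀ x ∈ E, ∃ q ∈ F, x ∈ dyadicCube n q.1 q.2) :
    dyadicContent n δ E ≤ ∑' q, F.indicator (cst δ) q := by
  classical
  refine ENNReal.le_of_forall_pos_le_add fun ε hε _ => ?_
  obtain ⟨ε', hε', hs⟩ := ENNReal.exists_pos_sum_of_countable' (ε := ε)
    (by exact_mod_cast hε.ne') ℕ
  choose s hsm using fun i => cst_small (n := n) δ hδ (ε' i) (hε' i).ne'
  obtain ⟨hden⟩ := nonempty_denumerable (ℤ × (Fin n → ℤ))
  let e := (Denumerable.eqv (ℤ × (Fin n → ℤ))).symm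
  let c : ℕ → ℤ × (Fin n → ℤ) := fun i => if e i ∈ F then e i else s i
  have hc : E ⊆ interior (⋃ i, dyadicCube n (c i).1 (c i).2) := by
    refine interior_maximal ?_ hE
    intro x hx
    obtain ⟨q, hq, hxq⟩ := h x hx
    refine mem_iUnion.2 ⟨e.symm q, ?_⟩
    simpa [c, hq] using hxq
  calc dyadicContent n δ E ≤ ∑' i, cst δ (c i) := iInf₂_le c hc
    _ ≤ ∑' i, (F.indicator (cst δ) (e i) + ε' i) := by
        refine ENNReal.tsum_le_tsum fun i => ?_
        by_cases hi : e i ∈ F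
        · simp [c, hi]
        · simpa [c, hi] using hsm i
    _ = ∑' q, F.indicator (cst δ) q + ∑' i, ε' i := by
        rw [ENNReal.tsum_add, e.tsum_eq (F.indicator (cst δ))]
    _ ≤ _ := by gcongr

/-- Sum of weights of cubes containing `x` of generation at least `k`. -/
def TT {n : ℕ} (w : ℤ × (Fin n → ℤ) → ℝ≥0∞) (x : En n) (k : ℤ) : ℝ≥0∞ :=
  ∑' j : ℤ, if k ≤ j then w (j, idx x j) else 0

lemma TT_congr {n : ℕ} (w : ℤ × (Fin n → ℤ) → ℝ≥0∞) (x y : En n) (k : ℤ)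
    (h : idx x k = idx y k) : TT w x (k + 1) = TT w y (k + 1) := by
  unfold TT
  refine tsum_congr fun j => ?_
  split_ifs with hj
  · rw [idx_mono x y k j (by omega) h]
  · rfl

lemma TT_succ {n : ℕ} (w : ℤ × (Fin n → ℤ) → ℝ≥0∞) (x : En n) (k : ℤ) :
    TT w x k = TT w x (k + 1) + w (k, idx x k) := by
  have : w (k, idx x k) = ∑' j : ℤ, if j = k then w (j, idx x j) else 0 := by
    rw [tsum_ite_eq]
  rw [this]
  unfold TT
  rw [← ENNReal.tsum_add]
  refine tsum_congr fun j => ?_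
  rcases lt_trichotomy j k with h | h | h
  · simp [show ¬ k ≤ j by omega, show ¬ k + 1 ≤ j by omega, show ¬ j = k by omega]
  · simp [h]
  · simp [show k ≤ j by omega, show k + 1 ≤ j by omega, show ¬ j = k by omega]

lemma TT_bound {n : ℕ} (δ : ℝ) (hδ : 0 < δ) (w : ℤ × (Fin n → ℤ) → ℝ≥0∞) (x : En n) (k : ℤ) :
    TT w x k * ENNReal.ofReal (((2 : ℝ) ^ k) ^ δ) ≤ ∑' q, w q * cst δ q := by
  unfold TT
  rw [← ENNReal.tsum_mul_right]
  calc _ ≤ ∑' j : ℤ, w (j, idx x j) * cst δ (j, idx x j) := by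
        refine ENNReal.tsum_le_tsum fun j => ?_
        split_ifs with hj
        · unfold cst
          gcongr
          norm_num
        · simp
    _ ≤ _ := ENNReal.tsum_comp_le_tsum_of_injective (f := fun j : ℤ => (j, idx x j))
        (fun a b hab => (Prod.ext_iff.1 hab).1) (fun q => w q * cst δ q)

lemma sum_eq {n : ℕ} (w : ℤ × (Fin n → ℤ) → ℝ≥0∞) (x : En n) :
    ∑' q : ℤ × (Fin n → ℤ), (dyadicCube n q.1 q.2).indicator (fun _ => w q) x
      = ∑' j : ℤ, w (j, idx x j) := by
  classical
  rw [ENNReal.tsum_prod']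
  refine tsum_congr fun j => ?_
  rw [← tsum_ite_eq (idx x j) (fun m => w (j, m))]
  refine tsum_congr fun m => ?_
  simp only [indicator, mem_cube_iff]

lemma exists_level {n : ℕ} (δ : ℝ) (hδ : 0 < δ) (w : ℤ × (Fin n → ℤ) → ℝ≥0∞)
    (hw : ∑' q, w q * cst δ q ≠ ∞) (x : En n) (t : ℝ≥0∞) (ht : 0 < t)
    (h : t < ∑' j : ℤ, w (j, idx x j)) :
    ∃ k, TT w x (k + 1) ≤ t ∧ t < TT w x (k + 1) + w (k, idx x k) := by
  have hne : ∃ k, t < TT w x k := by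
    rw [ENNReal.tsum_eq_iSup_sum] at h
    obtain ⟨s, hs⟩ := lt_iSup_iff.1 h
    obtain ⟨k, hk⟩ := s.bddBelow
    refine ⟨k, hs.trans_le ?_⟩
    calc _ = ∑ j ∈ s, if k ≤ j then w (j, idx x j) else 0 := by
          refine Finset.sum_congr rfl fun j hj => ?_
          rw [if_pos (hk hj)]
      _ ≤ _ := ENNReal.sum_le_tsum s
  have hbd : ∃ K : ℤ, ∀ k, t < TT w x k → k ≤ K := by
    set C := ∑' q, w q * cst δ q with hC
    have htC : Tendsto (fun k : ℕ => ENNReal.ofReal (((1/2 : ℝ) ^ k) ^ δ) * C) atTop (𝓝 0) := by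
      have h1 : Tendsto (fun k : ℕ => ((1/2 : ℝ) ^ k)) atTop (𝓝 0) :=
        tendsto_pow_atTop_nhds_zero_of_lt_one (by norm_num) (by norm_num)
      have h2 := h1.rpow_const (p := δ) (Or.inr hδ.le)
      rw [Real.zero_rpow hδ.ne'] at h2
      have h3 := ENNReal.Tendsto.mul_const (b := C) (ENNReal.tendsto_ofReal h2) (Or.inr hw)
      simpa using h3
    obtain ⟨K, hK⟩ := (htC.eventually (gt_mem_nhds ht)).exists
    refine ⟨K, fun k hk => ?_⟩
    by_contra! hkK
    refine absurd hK (not_lt.2 (hk.le.trans ?_))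
    have hTK : TT w x k ≤ TT w x K := by
      refine ENNReal.tsum_le_tsum fun j => ?_
      by_cases hj : k ≤ j
      · simp [hj, show (K : ℤ) ≤ j by omega]
      · simp [hj]
    refine hTK.trans ?_
    have hb := TT_bound δ hδ w x K
    calc TT w x K = ENNReal.ofReal (((1/2 : ℝ) ^ K) ^ δ) *
          (TT w x K * ENNReal.ofReal (((2 : ℝ) ^ (K : ℤ)) ^ δ)) := by
          rw [mul_left_comm, ← ENNReal.ofReal_mul (by positivity), ← Real.mul_rpow (by positivity)
            (by positivity), zpow_natCast, ← mul_pow]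
          norm_num
      _ ≤ _ := by gcongr
  obtain ⟨K, hK⟩ := hbd
  obtain ⟨k, hk, hmax⟩ := Int.exists_greatest_of_bdd (P := fun k => t < TT w x k) ⟨K, hK⟩ hne
  refine ⟨k, ?_, ?_⟩
  · by_contra! hc
    have := hmax _ hc
    omega
  · rwa [← TT_succ]

lemma vol_le (A w : ℝ≥0∞) : volume.restrict (Ioi (0:ℝ))
    {t : ℝ | A ≤ ENNReal.ofReal t ∧ ENNReal.ofReal t < A + w} ≤ w := by
  by_cases hw : w = ∞
  · simp [hw]
  by_cases hA : A = ∞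
  · simp [hA]
  have hm : MeasurableSet {t : ℝ | A ≤ ENNReal.ofReal t ∧ ENNReal.ofReal t < A + w} :=
    (measurableSet_le measurable_const ENNReal.measurable_ofReal).inter
      (measurableSet_lt ENNReal.measurable_ofReal measurable_const)
  rw [Measure.restrict_apply hm]
  calc _ ≤ volume (Ico A.toReal (A + w).toReal) := by
        refine measure_mono ?_
        rintro t ⟨⟨h1, h2⟩, h3⟩
        have h3' : (0 : ℝ) < t := h3
        exact ⟨ENNReal.toReal_le_of_le_ofReal h3'.le h1,
          (ENNReal.ofReal_lt_iff_lt_toReal h3'.le (ENNReal.add_ne_top.2 ⟨hA, hw⟩)).1 h2⟩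
    _ = w := by
        rw [Real.volume_Ico, ENNReal.toReal_add hA hw, add_sub_cancel_left,
          ENNReal.ofReal_toReal hw]

lemma key {n : ℕ} (δ : ℝ) (hδ : 0 < δ) (w : ℤ × (Fin n → ℤ) → ℝ≥0∞)
    (hw : ∑' q, w q * cst δ q ≠ ∞) (V : ℝ → Set (En n)) (hV : ∀ t, IsOpen (V t))
    (h : ∀ t, 0 < t → ∀ x ∈ V t, ENNReal.ofReal t <
      ∑' q : ℤ × (Fin n → ℤ), (dyadicCube n q.1 q.2).indicator (fun _ => w q) x) :
    ∫⁻ t in Ioi (0 : ℝ), dyadicContent n δ (V t) ≤ ∑' q, w q * cst δ q := by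
  let y : ℤ × (Fin n → ℤ) → En n := fun q => WithLp.toLp 2 fun i => (q.2 i : ℝ) * 2 ^ q.1
  have hy : ∀ q, idx (y q) q.1 = q.2 := by
    intro q
    funext i
    have h2 : (2 : ℝ) ^ q.1 ≠ 0 := by positivity
    simp [idx, y, mul_div_cancel_right₀ _ h2]
  let I : ℤ × (Fin n → ℤ) → Set ℝ := fun q =>
    {t | TT w (y q) (q.1 + 1) ≤ ENNReal.ofReal t ∧ ENNReal.ofReal t < TT w (y q) (q.1 + 1) + w q}
  have hI : ∀ q, MeasurableSet (I q) := fun q =>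
    (measurableSet_le measurable_const ENNReal.measurable_ofReal).inter
      (measurableSet_lt ENNReal.measurable_ofReal measurable_const)
  calc ∫⁻ t in Ioi (0 : ℝ), dyadicContent n δ (V t)
      ≤ ∫⁻ t in Ioi (0 : ℝ), ∑' q, (I q).indicator (fun _ => cst δ q) t := by
        refine setLIntegral_mono' measurableSet_Ioi fun t ht => ?_
        refine (content_le δ hδ {q | t ∈ I q} (V t) (hV t) ?_).trans_eq ?_
        · intro x hx
          have h1 := h t ht x hx
          rw [sum_eq] at h1
          obtain ⟨k, hk1, hk2⟩ := exists_level δ hδ w hw x _ (by simpa using ht) h1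
          refine ⟨(k, idx x k), ?_, (mem_cube_iff _ _ _).2 rfl⟩
          have e := TT_congr w (y (k, idx x k)) x k (hy _)
          simp only [I, mem_ofPred_eq, e]
          exact ⟨hk1, hk2⟩
        · refine tsum_congr fun q => ?_
          simp [indicator]
    _ = ∑' q, ∫⁻ t in Ioi (0 : ℝ), (I q).indicator (fun _ => cst δ q) t :=
        lintegral_tsum fun q => (measurable_const.indicator (hI q)).aemeasurable
    _ ≤ _ := by
        refine ENNReal.tsum_le_tsum fun q => ?_
        rw [lintegral_indicator_const (hI q), mul_comm]
        gcongr
        exact vol_le _ _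

lemma Ioc_union (r : ℝ) (hr : 1 < r) : ⋃ k : ℤ, Ioc (r ^ k) (r ^ (k + 1)) = Ioi 0 := by
  ext s
  simp only [mem_iUnion, mem_Ioi]
  constructor
  · rintro ⟨k, hk, _⟩
    exact lt_trans (by positivity) hk
  · intro hs
    exact exists_mem_Ioc_zpow hs hr

lemma Ioc_disj (r : ℝ) (hr : 1 < r) :
    Pairwise (Function.onFun Disjoint fun k : ℤ => Ioc (r ^ k) (r ^ (k + 1))) :=
  (zpow_right_mono₀ hr.le).pairwise_disjoint_on_Ioc_succ

lemma int_eq (r : ℝ) (hr : 1 < r) (φ : ℝ → ℝ≥0∞) :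
    ∫⁻ t in Ioi (0:ℝ), φ t = ∑' k : ℤ, ∫⁻ t in Ioc (r ^ k) (r ^ (k + 1)), φ t := by
  rw [← Ioc_union r hr, lintegral_iUnion (fun _ => measurableSet_Ioc) (Ioc_disj r hr)]

lemma int_le_sum (r : ℝ) (hr : 1 < r) (φ : ℝ → ℝ≥0∞) (hφ : Antitone φ) :
    ∫⁻ t in Ioi (0:ℝ), φ t ≤ ∑' k : ℤ, ENNReal.ofReal (r ^ (k + 1) - r ^ k) * φ (r ^ k) := by
  rw [int_eq r hr]
  refine ENNReal.tsum_le_tsum fun k => ?_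
  calc _ ≤ ∫⁻ t in Ioc (r ^ k) (r ^ (k + 1)), φ (r ^ k) :=
        setLIntegral_mono' measurableSet_Ioc fun t ht => hφ ht.1.le
    _ = _ := by simp [mul_comm]

lemma sum_le_int (r : ℝ) (hr : 1 < r) (φ : ℝ → ℝ≥0∞) (hφ : Antitone φ) :
    ∑' k : ℤ, ENNReal.ofReal (r ^ (k + 1) - r ^ k) * φ (r ^ k) ≤
      ENNReal.ofReal r * ∫⁻ t in Ioi (0:ℝ), φ t := by
  rw [int_eq r hr, ← ENNReal.tsum_mul_left, ← (Equiv.addRight (1 : ℤ)).tsum_eq]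
  refine ENNReal.tsum_le_tsum fun k => ?_
  have hr0 : 0 < r := by linarith
  simp only [Equiv.coe_addRight]
  have e : r ^ (k + 1 + 1) - r ^ (k + 1) = r * (r ^ (k + 1) - r ^ k) := by
    rw [zpow_add_one₀ hr0.ne' (k + 1), zpow_add_one₀ hr0.ne' k]; ring
  rw [e, ENNReal.ofReal_mul hr0.le, mul_assoc]
  gcongr
  calc _ = ∫⁻ t in Ioc (r ^ k) (r ^ (k + 1)), φ (r ^ (k + 1)) := by simp [mul_comm]
    _ ≤ _ := setLIntegral_mono' measurableSet_Ioc fun t ht => hφ ht.2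

lemma le_layer (r : ℝ) (hr : 1 < r) (y : ℝ≥0∞) :
    y ≤ ∑' k : ℤ, {k : ℤ | ENNReal.ofReal (r ^ k) < y}.indicator
      (fun k => ENNReal.ofReal (r ^ (k + 1) - r ^ k)) k := by
  classical
  have h := int_le_sum r hr (fun t => if ENNReal.ofReal t < y then 1 else 0) (by
    intro a b hab
    dsimp only
    split_ifs with h1 h2 <;> first | simp | skip
    exact absurd ((ENNReal.ofReal_le_ofReal hab).trans_lt h1) h2)
  have h2 : y ≤ ∫⁻ t in Ioi (0:ℝ), (if ENNReal.ofReal t < y then 1 else 0) := by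
    have hm : MeasurableSet {t : ℝ | ENNReal.ofReal t < y} :=
      measurableSet_lt ENNReal.measurable_ofReal measurable_const
    have e : ∫⁻ t in Ioi (0:ℝ), (if ENNReal.ofReal t < y then (1:ℝ≥0∞) else 0)
        = volume.restrict (Ioi (0:ℝ)) {t : ℝ | ENNReal.ofReal t < y} := by
      rw [← lintegral_indicator_one hm]
      refine lintegral_congr fun t => ?_
      simp [indicator]
    rw [e, Measure.restrict_apply hm]
    by_cases hy : y = ∞
    · simp [hy]
    · calc y = volume (Ioo 0 y.toReal) := by simp [hy]
        _ ≤ _ := by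
          refine measure_mono fun t ht => ⟨?_, ht.1⟩
          exact (ENNReal.ofReal_lt_iff_lt_toReal ht.1.le hy).2 ht.2
  refine (h2.trans h).trans_eq (tsum_congr fun k => ?_)
  simp [indicator]

lemma content_mono {n : ℕ} (δ : ℝ) {E E' : Set (En n)} (h : E ⊆ E') :
    dyadicContent n δ E ≤ dyadicContent n δ E' :=
  le_iInf₂ fun c hc => iInf₂_le c (h.trans hc)

lemma main_eps (n : ℕ) (Ω : Set (En n)) (δ : ℝ) (hδ : 0 < δ) (f : ℕ → En n → ℝ≥0∞)
    (hfin : ∑' i, choquetIntegral n δ Ω (f i) ≠ ∞) (r : ℝ) (hr : 1 < r) (ε : ℝ≥0∞) (hε : ε ≠ 0)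
    (hε' : ε ≠ ∞) :
    choquetIntegral n δ Ω (fun x => ∑' i, f i x) ≤
      ENNReal.ofReal r * ∑' i, choquetIntegral n δ Ω (f i) + ε := by
  classical
  let a : ℤ → ℝ≥0∞ := fun k => ENNReal.ofReal (r ^ (k + 1) - r ^ k)
  have ha0 : ∀ k, a k ≠ 0 := by
    intro k
    simp only [a, ne_eq, ENNReal.ofReal_eq_zero, not_le, sub_pos]
    exact zpow_lt_zpow_right₀ hr (by omega)
  have haT : ∀ k, a k ≠ ∞ := fun k => ENNReal.ofReal_ne_top
  let E : ℕ × ℤ → Set (En n) := fun p => {x | x ∈ Ω ∧ ENNReal.ofReal (r ^ p.2) < f p.1 x}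
  have hsum : ∑' p : ℕ × ℤ, a p.2 * dyadicContent n δ (E p) ≤
      ENNReal.ofReal r * ∑' i, choquetIntegral n δ Ω (f i) := by
    rw [ENNReal.tsum_prod', ← ENNReal.tsum_mul_left]
    refine ENNReal.tsum_le_tsum fun i => ?_
    refine sum_le_int r hr (fun t => dyadicContent n δ {x | x ∈ Ω ∧ ENNReal.ofReal t < f i x}) ?_
    intro s t hst
    exact content_mono δ fun x hx => ⟨hx.1, (ENNReal.ofReal_le_ofReal hst).trans_lt hx.2⟩
  have hsumT := ne_top_of_le_ne_top (ENNReal.mul_ne_top ENNReal.ofReal_ne_top hfin) hsum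
  have hET : ∀ p, dyadicContent n δ (E p) ≠ ∞ := by
    intro p hp
    have := ENNReal.ne_top_of_tsum_ne_top hsumT p
    rw [hp, ENNReal.mul_top (ha0 _)] at this
    exact this rfl
  obtain ⟨ε', hε'0, hε's⟩ := ENNReal.exists_pos_sum_of_countable' hε (ℕ × ℤ)
  have hcov : ∀ p, ∃ c : ℕ → ℤ × (Fin n → ℤ),
      E p ⊆ interior (⋃ i, dyadicCube n (c i).1 (c i).2) ∧
      ∑' i, cst δ (c i) ≤ dyadicContent n δ (E p) + ε' p / a p.2 := by
    intro p
    have hlt : dyadicContent n δ (E p) < dyadicContent n δ (E p) + ε' p / a p.2 :=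
      ENNReal.lt_add_right (hET p) (ENNReal.div_pos (hε'0 p).ne' (haT _)).ne'
    obtain ⟨c, hc⟩ := iInf_lt_iff.1 hlt
    obtain ⟨hc1, hc2⟩ := iInf_lt_iff.1 hc
    exact ⟨c, hc1, hc2.le⟩
  choose c hc1 hc2 using hcov
  let U : ℕ × ℤ → Set (En n) := fun p => interior (⋃ i, dyadicCube n (c p i).1 (c p i).2)
  let w : ℤ × (Fin n → ℤ) → ℝ≥0∞ := fun q =>
    ∑' p : ℕ × ℤ, ∑' j : ℕ, if q = c p j then a p.2 else 0
  have hwG : ∀ G : ℤ × (Fin n → ℤ) → ℝ≥0∞, ∑' q, w q * G q =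
      ∑' p : ℕ × ℤ, ∑' j, a p.2 * G (c p j) := by
    intro G
    simp only [w, ← ENNReal.tsum_mul_right]
    rw [ENNReal.tsum_comm]
    refine tsum_congr fun p => ?_
    rw [ENNReal.tsum_comm]
    refine tsum_congr fun j => ?_
    rw [← tsum_ite_eq (c p j) (fun q => a p.2 * G q)]
    refine tsum_congr fun q => ?_
    split_ifs <;> simp
  have hcost : ∑' q, w q * cst δ q ≤
      ENNReal.ofReal r * ∑' i, choquetIntegral n δ Ω (f i) + ε := by
    rw [hwG]
    calc _ ≤ ∑' p : ℕ × ℤ, (a p.2 * dyadicContent n δ (E p) + ε' p) := by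
          refine ENNReal.tsum_le_tsum fun p => ?_
          rw [ENNReal.tsum_mul_left]
          calc _ ≤ a p.2 * (dyadicContent n δ (E p) + ε' p / a p.2) := by gcongr; exact hc2 p
            _ = _ := by rw [mul_add, ENNReal.mul_div_cancel (ha0 _) (haT _)]
      _ ≤ _ := by
          rw [ENNReal.tsum_add]
          gcongr
  let V : ℝ → Set (En n) := fun t =>
    {x | ENNReal.ofReal t < ∑' p, (U p).indicator (fun _ => a p.2) x}
  have hV : ∀ t, IsOpen (V t) := by
    intro t
    have hl : LowerSemicontinuous fun x => ∑' p, (U p).indicator (fun _ => a p.2) x :=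
      lowerSemicontinuous_tsum fun p => isOpen_interior.lowerSemicontinuous_indicator zero_le
    exact hl.isOpen_preimage _
  refine le_trans ?_ ((key δ hδ w (ne_top_of_le_ne_top (ENNReal.add_ne_top.2
    ⟨ENNReal.mul_ne_top ENNReal.ofReal_ne_top hfin, hε'⟩) hcost) V hV ?_).trans hcost)
  · refine lintegral_mono fun t => content_mono δ fun x hx => ?_
    refine hx.2.trans_le ?_
    rw [ENNReal.tsum_prod']
    refine ENNReal.tsum_le_tsum fun i => ?_
    refine (le_layer r hr (f i x)).trans (ENNReal.tsum_le_tsum fun k => ?_)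
    by_cases hk : ENNReal.ofReal (r ^ k) < f i x
    · have : x ∈ U (i, k) := hc1 (i, k) ⟨hx.1, hk⟩
      simp [hk, this, a]
    · simp [hk]
  · intro t _ x hx
    refine lt_of_lt_of_le hx ?_
    have e : ∀ q : ℤ × (Fin n → ℤ), (dyadicCube n q.1 q.2).indicator (fun _ => w q) x =
        w q * (dyadicCube n q.1 q.2).indicator (fun _ => 1) x := by
      intro q
      by_cases hq : x ∈ dyadicCube n q.1 q.2 <;> simp [hq]
    simp_rw [e]
    rw [hwG (fun q => (dyadicCube n q.1 q.2).indicator (fun _ => 1) x)]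
    refine ENNReal.tsum_le_tsum fun p => ?_
    by_cases hp : x ∈ U p
    · obtain ⟨j, hj⟩ := mem_iUnion.1 (interior_subset hp)
      refine le_trans ?_ (ENNReal.le_tsum j)
      simp [hp, hj]
    · simp [hp]

/-- countable sublinearity of the Choquet integral with respect to
the dyadic Hausdorff content, for arbitrary (not necessarily measurable)
nonnegative functions. -/
theorem choquet_countably_sublinear (n : ℕ) (hn : 1 ≤ n) (Ω : Set (En n))
    (δ : ℝ) (hδ0 : 0 < δ) (hδn : δ ≤ n) (f : ℕ → En n → ℝ≥0∞) :
    choquetIntegral n δ Ω (fun x => ∑' i, f i x) ≤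
      ∑' i, choquetIntegral n δ Ω (f i) := by
  by_cases hfin : ∑' i, choquetIntegral n δ Ω (f i) = ∞
  · rw [hfin]; exact le_top
  have h1 : ∀ r : ℝ, 1 < r → choquetIntegral n δ Ω (fun x => ∑' i, f i x) ≤
      ENNReal.ofReal r * ∑' i, choquetIntegral n δ Ω (f i) := by
    intro r hr
    refine ENNReal.le_of_forall_pos_le_add fun ε hε _ => ?_
    exact main_eps n Ω δ hδ0 f hfin r hr ε (by exact_mod_cast hε.ne') ENNReal.coe_ne_top
  have ht : Tendsto (fun r : ℝ => ENNReal.ofReal r * ∑' i, choquetIntegral n δ Ω (f i))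
      (𝓝[>] 1) (𝓝 (ENNReal.ofReal 1 * ∑' i, choquetIntegral n δ Ω (f i))) :=
    ENNReal.Tendsto.mul_const ((ENNReal.continuous_ofReal.tendsto 1).mono_left
      nhdsWithin_le_nhds) (Or.inr hfin)
  have h2 := ge_of_tendsto ht (by
    filter_upwards [self_mem_nhdsWithin] with r hr using h1 r hr)
  simpa using h2
end
end

section
/- Let n ≥ 1 and δ ∈ (0, n]. There exists a constant c > 0 depending only on δ and n such that for every f ∈ nL¹(ℝⁿ, H̃^δ_∞) and every λ > 0, H̃^δ_∞({x ∈ ℝⁿ : f^δ_*(x) > λ}) ≤ (c/λ) ∫_{ℝⁿ} |f| dH̃^δ_∞. -/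
open MeasureTheory Set Metric Filter Topology
open scoped ENNReal

noncomputable section

namespace LebDev

open scoped Classical in
/-- index type of dyadic cubes -/
abbrev D (n : ℕ) : Type := ℤ × (Fin n → ℤ)

def cube {n : ℕ} (Q : D n) : Set (En n) := dyadicCube n Q.1 Q.2

def wt {n : ℕ} (δ : ℝ) (Q : D n) : ℝ≥0∞ := ENNReal.ofReal (((2 : ℝ) ^ Q.1) ^ δ)

/-- containment of dyadic cubes, on the level of coordinates -/
def R {n : ℕ} (Q P : D n) : Prop :=
  Q.1 ≤ P.1 ∧ ∀ i, (P.2 i : ℝ) * 2 ^ P.1 ≤ (Q.2 i : ℝ) * 2 ^ Q.1 ∧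
    ((Q.2 i : ℝ) + 1) * 2 ^ Q.1 ≤ ((P.2 i : ℝ) + 1) * 2 ^ P.1

def trip {n : ℕ} (Q : D n) : Set (En n) :=
  {x | ∀ i, ((Q.2 i : ℝ) - 1) * 2 ^ Q.1 ≤ x i ∧ x i < ((Q.2 i : ℝ) + 2) * 2 ^ Q.1}

/-- neighbours of a cube -/
def nb {n : ℕ} (Q : D n) (v : Fin n → Fin 3) : D n := (Q.1, fun i => Q.2 i + ((v i : ℕ) : ℤ) - 1)

variable {n : ℕ}

lemma two_zpow_pos (k : ℤ) : (0 : ℝ) < 2 ^ k := by positivity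

lemma two_zpow_mono {j k : ℤ} (h : j ≤ k) : (2 : ℝ) ^ j ≤ 2 ^ k :=
  zpow_le_zpow_right₀ (by norm_num) h

lemma R_refl (Q : D n) : R Q Q := ⟨le_rfl, fun _ => ⟨le_rfl, le_rfl⟩⟩

lemma R_trans {Q P S : D n} (h1 : R Q P) (h2 : R P S) : R Q S :=
  ⟨h1.1.trans h2.1, fun i => ⟨(h2.2 i).1.trans (h1.2 i).1, (h1.2 i).2.trans (h2.2 i).2⟩⟩

lemma R_eq {Q P : D n} (h : R Q P) (hk : P.1 ≤ Q.1) : Q = P := by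
  obtain ⟨k, m⟩ := Q
  obtain ⟨k', m'⟩ := P
  have hkk : k = k' := le_antisymm h.1 hk
  subst hkk
  congr 1
  funext i
  have h2 := h.2 i
  have hp := two_zpow_pos k
  simp only at h2
  have a := le_of_mul_le_mul_right h2.1 hp
  have b := le_of_mul_le_mul_right h2.2 hp
  have a' : m' i ≤ m i := by exact_mod_cast a
  have b' : m i + 1 ≤ m' i + 1 := by exact_mod_cast b
  omega

lemma R_cube {Q P : D n} (h : R Q P) : cube Q ⊆ cube P := fun _ hx i =>
  ⟨(h.2 i).1.trans (hx i).1, (hx i).2.trans_le (h.2 i).2⟩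

lemma R_trip {Q P : D n} (h : R Q P) : trip Q ⊆ trip P := by
  intro x hx i
  have h1 := two_zpow_mono h.1
  have h2 := h.2 i
  have h3 := hx i
  constructor <;> nlinarith

lemma R_of_inter {Q P : D n} (hk : Q.1 ≤ P.1) {x : En n} (hQ : x ∈ cube Q) (hP : x ∈ cube P) :
    R Q P := by
  obtain ⟨k, m⟩ := Q
  obtain ⟨k', m'⟩ := P
  obtain ⟨j, rfl⟩ : ∃ j : ℕ, k' = k + j := ⟨(k' - k).toNat, by simp only at hk; omega⟩
  refine ⟨hk, fun i => ?_⟩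
  have h1 := hQ i
  have h2 := hP i
  simp only at h1 h2 ⊢
  have hp := two_zpow_pos k
  have e : (2 : ℝ) ^ (k + (j : ℤ)) = 2 ^ j * 2 ^ k := by
    rw [zpow_add₀ (by norm_num), zpow_natCast, mul_comm]
  rw [e] at h2 ⊢
  simp only [← mul_assoc] at h2 ⊢
  have a : (m' i : ℝ) * 2 ^ j < m i + 1 := lt_of_mul_lt_mul_right (h2.1.trans_lt h1.2) hp.le
  have b : (m i : ℝ) < (m' i + 1) * 2 ^ j := lt_of_mul_lt_mul_right (h1.1.trans_lt h2.2) hp.le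
  have a' : m' i * 2 ^ j < m i + 1 := by exact_mod_cast a
  have b' : m i < (m' i + 1) * 2 ^ j := by exact_mod_cast b
  have a'' : m' i * 2 ^ j ≤ m i := by omega
  have b'' : m i + 1 ≤ (m' i + 1) * 2 ^ j := by omega
  constructor
  · exact mul_le_mul_of_nonneg_right (by exact_mod_cast a'') hp.le
  · exact mul_le_mul_of_nonneg_right (by exact_mod_cast b'') hp.le

lemma cube_nonempty (Q : D n) : (cube Q).Nonempty := by
  refine ⟨WithLp.toLp 2 (fun i => (Q.2 i : ℝ) * 2 ^ Q.1), fun i => ?_⟩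
  have hp := two_zpow_pos Q.1
  constructor
  · exact le_rfl
  · show (Q.2 i : ℝ) * 2 ^ Q.1 < _
    nlinarith

lemma trichotomy (Q P : D n) : R Q P ∨ R P Q ∨ cube P ∩ cube Q = ∅ := by
  by_cases h : (cube P ∩ cube Q).Nonempty
  · obtain ⟨x, hP, hQ⟩ := h
    rcases le_total Q.1 P.1 with hk | hk
    · exact Or.inl (R_of_inter hk hQ hP)
    · exact Or.inr (Or.inl (R_of_inter hk hP hQ))
  · exact Or.inr (Or.inr (not_nonempty_iff_eq_empty.1 h))

/-- two cubes above a common cube are comparable -/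
lemma R_comparable {Q P P' : D n} (h : R Q P) (h' : R Q P') : R P P' ∨ R P' P := by
  obtain ⟨x, hx⟩ := cube_nonempty Q
  rcases le_total P.1 P'.1 with hk | hk
  · exact Or.inl (R_of_inter hk (R_cube h hx) (R_cube h' hx))
  · exact Or.inr (R_of_inter hk (R_cube h' hx) (R_cube h hx))

def anc (k : ℤ) (x : En n) : D n := (k, fun i => ⌊x i / 2 ^ k⌋)

lemma mem_anc (k : ℤ) (x : En n) : x ∈ cube (anc k x) := by
  intro i
  have hp := two_zpow_pos k
  constructor
  · show ((⌊x i / 2 ^ k⌋ : ℤ) : ℝ) * 2 ^ k ≤ x i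
    rw [← le_div_iff₀ hp]
    exact Int.floor_le _
  · show x i < (((⌊x i / 2 ^ k⌋ : ℤ) : ℝ) + 1) * 2 ^ k
    rw [← div_lt_iff₀ hp]
    exact Int.lt_floor_add_one _

lemma trip_subset (Q : D n) : trip Q ⊆ ⋃ v, cube (nb Q v) := by
  intro x hx
  have hp := two_zpow_pos Q.1
  have hm := mem_anc Q.1 x
  have key : ∀ i, ∃ w : Fin 3, (anc Q.1 x).2 i = Q.2 i + ((w : ℕ) : ℤ) - 1 := by
    intro i
    have h1 := hx i
    have h2 := hm i
    have a : (Q.2 i : ℝ) - 1 < (anc Q.1 x).2 i + 1 :=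
      lt_of_mul_lt_mul_right (h1.1.trans_lt h2.2) hp.le
    have b : ((anc Q.1 x).2 i : ℝ) < Q.2 i + 2 :=
      lt_of_mul_lt_mul_right (h2.1.trans_lt h1.2) hp.le
    have a' : Q.2 i - 1 < (anc Q.1 x).2 i + 1 := by exact_mod_cast a
    have b' : (anc Q.1 x).2 i < Q.2 i + 2 := by exact_mod_cast b
    refine ⟨⟨((anc Q.1 x).2 i + 1 - Q.2 i).toNat, by omega⟩, ?_⟩
    simp only
    omega
  choose v hv using key
  refine mem_iUnion.2 ⟨v, ?_⟩
  have : nb Q v = anc Q.1 x := by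
    apply Prod.ext
    · rfl
    · funext i; exact (hv i).symm
  rw [this]; exact hm

lemma fin3_bounds (w : Fin 3) : (0 : ℝ) ≤ ((w : ℕ) : ℝ) ∧ ((w : ℕ) : ℝ) ≤ 2 :=
  ⟨by positivity, by exact_mod_cast (show (w : ℕ) ≤ 2 by omega)⟩

lemma mem_trip_nb {Q : D n} {x : En n} (hx : x ∈ cube Q) (v) : x ∈ trip (nb Q v) := by
  intro i
  have hp := two_zpow_pos Q.1
  have h := hx i
  have hv := fin3_bounds (v i)
  simp only [nb]
  push_cast
  constructor <;> nlinarith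

lemma cube_subset_interior_trip (Q : D n) : cube Q ⊆ interior (trip Q) := by
  have ho : IsOpen {x : En n | ∀ i, ((Q.2 i : ℝ) - 1) * 2 ^ Q.1 < x i ∧
      x i < ((Q.2 i : ℝ) + 2) * 2 ^ Q.1} := by
    simp only [ofPred_forall]
    refine isOpen_iInter_of_finite fun i => ?_
    have hc : Continuous fun x : En n => x i := by fun_prop
    exact (isOpen_lt continuous_const hc).inter (isOpen_lt hc continuous_const)
  have hp := two_zpow_pos Q.1
  refine Subset.trans ?_ (interior_maximal (fun x hx i => ?_) ho)
  · intro x hx i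
    have h := hx i
    constructor <;> nlinarith
  · exact ⟨(hx i).1.le, (hx i).2⟩

lemma volume_cube (Q : D n) : volume (cube Q) = ENNReal.ofReal (2 ^ Q.1) ^ n := by
  have h : cube Q = (@WithLp.ofLp 2 (Fin n → ℝ)) ⁻¹'
      (univ.pi fun i => Ico ((Q.2 i : ℝ) * 2 ^ Q.1) (((Q.2 i : ℝ) + 1) * 2 ^ Q.1)) := by
    ext x
    simp [cube, dyadicCube]
  rw [h, (PiLp.volume_preserving_ofLp (Fin n)).measure_preimage
    (MeasurableSet.univ_pi fun i => measurableSet_Ico).nullMeasurableSet, Real.volume_pi_Ico]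
  have : ∀ i, ((Q.2 i : ℝ) + 1) * 2 ^ Q.1 - (Q.2 i : ℝ) * 2 ^ Q.1 = 2 ^ Q.1 := fun i => by ring
  simp [this]

/-! ### weights -/

lemma wt_ne_top (δ : ℝ) (Q : D n) : wt δ Q ≠ ⊤ := ENNReal.ofReal_ne_top

lemma wt_pos (δ : ℝ) (Q : D n) : 0 < wt δ Q :=
  ENNReal.ofReal_pos.2 (Real.rpow_pos_of_pos (two_zpow_pos _) _)

lemma wt_mono {δ : ℝ} (hδ : 0 < δ) {Q P : D n} (h : Q.1 ≤ P.1) : wt δ Q ≤ wt δ P :=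
  ENNReal.ofReal_le_ofReal (Real.rpow_le_rpow (two_zpow_pos _).le (two_zpow_mono h) hδ.le)

lemma wt_nb (δ : ℝ) (Q : D n) (v) : wt δ (nb Q v) = wt δ Q := rfl

lemma exists_small {δ : ℝ} (hδ : 0 < δ) {ε : ℝ≥0∞} (hε : 0 < ε) : ∃ Q : D n, wt δ Q ≤ ε := by
  have h1 : Tendsto (fun k : ℕ => ((2 : ℝ) ^ (-(k : ℤ)))) atTop (𝓝 0) := by
    have : (fun k : ℕ => ((2 : ℝ) ^ (-(k : ℤ)))) = fun k : ℕ => ((1 / 2 : ℝ)) ^ k := by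
      funext k; rw [zpow_neg, zpow_natCast]; simp
    rw [this]
    exact tendsto_pow_atTop_nhds_zero_of_lt_one (by norm_num) (by norm_num)
  have h2 : Tendsto (fun k : ℕ => ENNReal.ofReal (((2 : ℝ) ^ (-(k : ℤ))) ^ δ)) atTop (𝓝 0) := by
    have := ENNReal.tendsto_ofReal (h1.rpow_const (Or.inr hδ.le))
    simpa [Real.zero_rpow hδ.ne'] using this
  obtain ⟨k, hk⟩ := (h2.eventually (gt_mem_nhds hε)).exists
  exact ⟨(-(k : ℤ), 0), hk.le⟩

lemma exists_bound {δ : ℝ} (hδ : 0 < δ) {A : ℝ≥0∞} (hA : A ≠ ⊤) :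
    ∃ K : ℤ, ∀ Q : D n, wt δ Q ≤ A → Q.1 ≤ K := by
  have h1 : Tendsto (fun k : ℕ => ((2 : ℝ) ^ k) ^ δ) atTop atTop :=
    (tendsto_rpow_atTop hδ).comp (tendsto_pow_atTop_atTop_of_one_lt (by norm_num))
  obtain ⟨k, hk⟩ := (h1.eventually_gt_atTop A.toReal).exists
  refine ⟨k, fun Q hQ => ?_⟩
  by_contra hc
  have h2 : wt δ ((k, Q.2) : D n) ≤ A := (wt_mono hδ (by simp only; omega)).trans hQ
  have h3 := (ENNReal.ofReal_le_iff_le_toReal hA).1 h2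
  simp only [zpow_natCast] at h3
  linarith

/-! ### maximal cubes -/

lemma exists_maximal {F : Set (D n)} {K : ℤ} (hF : ∀ Q ∈ F, Q.1 ≤ K) {Q : D n} (hQ : Q ∈ F) :
    ∃ P ∈ F, R Q P ∧ ∀ P' ∈ F, R P P' → P' = P := by
  obtain ⟨k, ⟨P, hP, hQP, rfl⟩, hmax⟩ := Int.exists_greatest_of_bdd
    (P := fun k => ∃ P ∈ F, R Q P ∧ P.1 = k) ⟨K, by rintro z ⟨P, hP, -, rfl⟩; exact hF P hP⟩
    ⟨Q.1, Q, hQ, R_refl Q, rfl⟩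
  refine ⟨P, hP, hQP, fun P' hP' h => ?_⟩
  exact (R_eq h (hmax _ ⟨P', hP', R_trans hQP h, rfl⟩)).symm

/-- the maximal elements of a family -/
def maxs (F : Set (D n)) : Set (D n) := {P | P ∈ F ∧ ∀ P' ∈ F, R P P' → P' = P}

/-- antichain condition -/
def AC (S : Set (D n)) : Prop := ∀ P ∈ S, ∀ P' ∈ S, R P P' → P' = P

lemma AC_maxs (F : Set (D n)) : AC (maxs F) := fun _ hP _ hP' h => hP.2 _ hP'.1 h

lemma AC.unique {S : Set (D n)} (hS : AC S) {Q P P' : D n} (hP : P ∈ S) (hP' : P' ∈ S)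
    (h : R Q P) (h' : R Q P') : P' = P := by
  rcases R_comparable h h' with h | h
  · exact hS _ hP _ hP' h
  · exact (hS _ hP' _ hP h).symm

open scoped Classical in
lemma AC.tsum_le {S : Set (D n)} (hS : AC S) (Q : D n) (w : ℝ≥0∞) :
    ∑' P, (if P ∈ S ∧ R Q P then w else 0) ≤ w := by
  by_cases h : ∃ P0 ∈ S, R Q P0
  · obtain ⟨P0, h0, h1⟩ := h
    rw [tsum_eq_single P0]
    · split_ifs <;> simp
    · intro P hne
      rw [if_neg]
      rintro ⟨h2, h3⟩
      exact hne (hS.unique h0 h2 h1 h3)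
  · rw [ENNReal.tsum_eq_zero.2]
    · exact zero_le
    · intro P
      rw [if_neg]
      rintro ⟨h2, h3⟩
      exact h ⟨P, h2, h3⟩

/-! ### the auxiliary outer measure -/

open scoped Classical in
def H0fun (δ : ℝ) (E : Set (En n)) : ℝ≥0∞ :=
  ⨅ (c : Set (D n)) (_ : E ⊆ ⋃ Q ∈ c, cube Q), ∑' Q, if Q ∈ c then wt δ Q else 0

open scoped Classical in
def H0 (n : ℕ) (δ : ℝ) : OuterMeasure (En n) where
  measureOf := H0fun δ
  empty := by
    apply le_antisymm _ zero_le
    refine (iInf₂_le (∅ : Set (D n)) (by simp)).trans (by simp)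
  mono := by
    intro s t hst
    refine le_iInf₂ fun c hc => iInf₂_le c (hst.trans hc)
  iUnion_nat := by
    intro s _
    apply ENNReal.le_of_forall_pos_le_add
    intro ε hε hfin
    obtain ⟨ε', hε', hsum⟩ := ENNReal.exists_pos_sum_of_countable' (ENNReal.coe_pos.2 hε).ne' ℕ
    have : ∀ i, ∃ c : Set (D n), s i ⊆ ⋃ Q ∈ c, cube Q ∧
        (∑' Q, if Q ∈ c then wt δ Q else 0) < H0fun δ (s i) + ε' i := by
      intro i
      have hlt : H0fun δ (s i) < H0fun δ (s i) + ε' i :=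
        ENNReal.lt_add_right (ne_top_of_le_ne_top hfin.ne (ENNReal.le_tsum i)) (hε' i).ne'
      conv at hlt => lhs; unfold H0fun
      simp only [iInf_lt_iff] at hlt
      obtain ⟨c, hc, h⟩ := hlt
      exact ⟨c, hc, h⟩
    choose c hc hlt using this
    calc H0fun δ (⋃ i, s i) ≤ ∑' Q, if Q ∈ ⋃ i, c i then wt δ Q else 0 := by
          refine iInf₂_le (⋃ i, c i) ?_
          intro x hx
          obtain ⟨i, hi⟩ := mem_iUnion.1 hx
          obtain ⟨Q, hQ, hxQ⟩ := mem_iUnion₂.1 (hc i hi)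
          exact mem_iUnion₂.2 ⟨Q, mem_iUnion.2 ⟨i, hQ⟩, hxQ⟩
      _ ≤ ∑' Q, ∑' i, if Q ∈ c i then wt δ Q else 0 := by
          refine ENNReal.tsum_le_tsum fun Q => ?_
          split_ifs with h
          · obtain ⟨i, hi⟩ := mem_iUnion.1 h
            refine le_trans ?_ (ENNReal.le_tsum i)
            rw [if_pos hi]
          · exact zero_le
      _ = ∑' i, ∑' Q, if Q ∈ c i then wt δ Q else 0 := ENNReal.tsum_comm
      _ ≤ ∑' i, (H0fun δ (s i) + ε' i) := ENNReal.tsum_le_tsum fun i => (hlt i).le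
      _ = ∑' i, H0fun δ (s i) + ∑' i, ε' i := ENNReal.tsum_add
      _ ≤ _ := by gcongr

open scoped Classical in
lemma H0_le {δ : ℝ} {E : Set (En n)} {c : Set (D n)} (h : E ⊆ ⋃ Q ∈ c, cube Q) :
    H0 n δ E ≤ ∑' Q, if Q ∈ c then wt δ Q else 0 := iInf₂_le c h

open scoped Classical in
lemma le_H0 {δ : ℝ} {E : Set (En n)} {a : ℝ≥0∞}
    (h : ∀ c : Set (D n), E ⊆ ⋃ Q ∈ c, cube Q → a ≤ ∑' Q, if Q ∈ c then wt δ Q else 0) :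
    a ≤ H0 n δ E := le_iInf₂ h

lemma H0_cube_le (δ : ℝ) (Q : D n) : H0 n δ (cube Q) ≤ wt δ Q := by
  classical
  refine (H0_le (c := {Q}) (by simp)).trans ?_
  simp only [mem_singleton_iff]
  rw [tsum_ite_eq]

lemma H0_trip_le (δ : ℝ) (Q : D n) : H0 n δ (trip Q) ≤ 3 ^ n * wt δ Q := by
  refine (measure_mono (trip_subset Q)).trans ((measure_iUnion_fintype_le _ _).trans ?_)
  refine (Finset.sum_le_sum fun v _ => H0_cube_le δ (nb Q v)).trans ?_
  simp [wt_nb]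

lemma H0_le_dyadic (δ : ℝ) (E : Set (En n)) : H0 n δ E ≤ dyadicContent n δ E := by
  classical
  refine le_iInf₂ fun c hc => ?_
  refine (H0_le (c := range c) ?_).trans ?_
  · refine (hc.trans interior_subset).trans ?_
    intro x hx
    obtain ⟨i, hi⟩ := mem_iUnion.1 hx
    exact mem_iUnion₂.2 ⟨c i, ⟨i, rfl⟩, hi⟩
  · calc (∑' Q, if Q ∈ range c then wt δ Q else 0)
        ≤ ∑' Q, ∑' i, if Q = c i then wt δ Q else 0 := by
          refine ENNReal.tsum_le_tsum fun Q => ?_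
          split_ifs with h
          · obtain ⟨i, hi⟩ := h
            refine le_trans ?_ (ENNReal.le_tsum i)
            rw [if_pos hi.symm]
          · exact zero_le
      _ = ∑' i, ∑' Q, if Q = c i then wt δ Q else 0 := ENNReal.tsum_comm
      _ = ∑' i, wt δ (c i) := by
          congr 1; funext i; rw [tsum_ite_eq]
      _ ≤ _ := le_rfl

open scoped Classical in
lemma dyadic_le {δ : ℝ} (hδ : 0 < δ) (E : Set (En n)) (c : Set (D n))
    (h : E ⊆ interior (⋃ Q ∈ c, cube Q)) :
    dyadicContent n δ E ≤ ∑' Q, if Q ∈ c then wt δ Q else 0 := by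
  apply ENNReal.le_of_forall_pos_le_add
  intro ε hε _
  obtain ⟨ε', hε', hsum⟩ := ENNReal.exists_pos_sum_of_countable' (ENNReal.coe_pos.2 hε).ne' (D n)
  obtain ⟨e⟩ : Nonempty (ℕ ≃ D n) := nonempty_equiv_of_countable
  choose s hs using fun Q : D n => exists_small (n := n) hδ (hε' Q)
  let g : D n → D n := fun Q => if Q ∈ c then Q else s Q
  have hg : ∀ Q, wt δ (g Q) ≤ (if Q ∈ c then wt δ Q else 0) + ε' Q := by
    intro Q
    simp only [g]
    split_ifs
    · exact le_self_add
    · simpa using hs Q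
  calc dyadicContent n δ E ≤ ∑' i, wt δ (g (e i)) := by
        refine iInf₂_le (fun i => g (e i)) (h.trans (interior_mono ?_))
        intro x hx
        obtain ⟨Q, hQ, hxQ⟩ := mem_iUnion₂.1 hx
        refine mem_iUnion.2 ⟨e.symm Q, ?_⟩
        simp only [Equiv.apply_symm_apply, g, if_pos hQ]
        exact hxQ
    _ = ∑' Q, wt δ (g Q) := e.tsum_eq (fun Q => wt δ (g Q))
    _ ≤ ∑' Q, ((if Q ∈ c then wt δ Q else 0) + ε' Q) := ENNReal.tsum_le_tsum hg
    _ = _ := ENNReal.tsum_add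
    _ ≤ _ := by gcongr

lemma dyadic_le_H0 {δ : ℝ} (hδ : 0 < δ) (E : Set (En n)) :
    dyadicContent n δ E ≤ 3 ^ n * H0 n δ E := by
  classical
  have h3 : (3 : ℝ≥0∞) ^ n ≠ 0 := by positivity
  have h3' : (3 : ℝ≥0∞) ^ n ≠ ⊤ := by finiteness
  rw [mul_comm, ← ENNReal.div_le_iff_le_mul (Or.inl h3) (Or.inl h3')]
  refine le_H0 fun c hc => ?_
  rw [ENNReal.div_le_iff_le_mul (Or.inl h3) (Or.inl h3')]
  have h := dyadic_le hδ E {Q | ∃ P ∈ c, ∃ v, Q = nb P v} (by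
    intro x hx
    obtain ⟨P, hP, hxP⟩ := mem_iUnion₂.1 (hc hx)
    refine interior_mono ?_ (cube_subset_interior_trip P hxP)
    intro y hy
    obtain ⟨v, hv⟩ := mem_iUnion.1 (trip_subset P hy)
    exact mem_iUnion₂.2 ⟨_, ⟨P, hP, v, rfl⟩, hv⟩)
  refine h.trans ?_
  calc _ ≤ ∑' Q, ∑' P, ∑' v, if Q = nb P v then (if P ∈ c then wt δ P else 0) else 0 := by
        refine ENNReal.tsum_le_tsum fun Q => ?_
        split_ifs with h
        · obtain ⟨P, hP, v, rfl⟩ := h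
          refine le_trans ?_ (ENNReal.le_tsum P)
          refine le_trans ?_ (ENNReal.le_tsum v)
          simp [hP, wt_nb]
        · exact zero_le
    _ = ∑' P, ∑' v, ∑' Q, if Q = nb P v then (if P ∈ c then wt δ P else 0) else 0 := by
        rw [ENNReal.tsum_comm]
        congr 1; funext P
        exact ENNReal.tsum_comm
    _ = ∑' P, ∑' v : Fin n → Fin 3, if P ∈ c then wt δ P else 0 := by
        congr 1; funext P; congr 1; funext v
        exact tsum_ite_eq (nb P v) (fun _ => if P ∈ c then wt δ P else 0)
    _ = ∑' P, (3 ^ n) * (if P ∈ c then wt δ P else 0) := by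
        congr 1; funext P; rw [tsum_fintype]; simp
    _ = _ := by rw [ENNReal.tsum_mul_left, mul_comm]
    _ ≤ _ := le_rfl

lemma wt_le_H0 {δ : ℝ} (hδ : 0 < δ) (hn : δ ≤ n) (Q : D n) : wt δ Q ≤ H0 n δ (cube Q) := by
  classical
  refine le_H0 fun c hc => ?_
  by_cases h : ∃ P ∈ c, Q.1 ≤ P.1
  · obtain ⟨P, hP, hk⟩ := h
    refine (wt_mono hδ hk).trans (le_trans ?_ (ENNReal.le_tsum P))
    rw [if_pos hP]
  · push Not at h
    have hv : volume (cube Q) ≤ ∑' P, if P ∈ c then volume (cube P) else 0 := by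
      refine (measure_mono hc).trans ?_
      have : (⋃ P ∈ c, cube P) ⊆ ⋃ P : D n, if P ∈ c then cube P else ∅ := by
        intro x hx
        obtain ⟨P, hP, hxP⟩ := mem_iUnion₂.1 hx
        exact mem_iUnion.2 ⟨P, by rwa [if_pos hP]⟩
      refine (measure_mono this).trans ((measure_iUnion_le _).trans ?_)
      refine ENNReal.tsum_le_tsum fun P => ?_
      split_ifs <;> simp
    have hq := two_zpow_pos Q.1
    -- `a` is the ratio `wt Q / vol Q`
    set a : ℝ≥0∞ := ENNReal.ofReal (((2 : ℝ) ^ Q.1) ^ δ / ((2 : ℝ) ^ Q.1) ^ n) with ha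
    have e1 : wt δ Q = a * volume (cube Q) := by
      rw [volume_cube, ha, ← ENNReal.ofReal_pow hq.le, ← ENNReal.ofReal_mul (by positivity), wt]
      congr 1
      field_simp
    have e2 : ∀ P ∈ c, a * volume (cube P) ≤ wt δ P := by
      intro P hP
      have hp := two_zpow_pos P.1
      rw [volume_cube, ha, ← ENNReal.ofReal_pow hp.le, ← ENNReal.ofReal_mul (by positivity), wt]
      apply ENNReal.ofReal_le_ofReal
      have hle := two_zpow_mono (h P hP).le
      rw [div_mul_eq_mul_div, div_le_iff₀ (by positivity)]
      have e : ∀ t : ℝ, 0 < t → t ^ n = t ^ δ * t ^ ((n : ℝ) - δ) := by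
        intro t ht
        rw [← Real.rpow_add ht, ← Real.rpow_natCast]; congr 1; ring
      rw [e _ hp, e _ hq]
      have h4 : ((2 : ℝ) ^ P.1) ^ ((n : ℝ) - δ) ≤ ((2 : ℝ) ^ Q.1) ^ ((n : ℝ) - δ) :=
        Real.rpow_le_rpow hp.le hle (by linarith)
      have h5 : 0 < ((2 : ℝ) ^ P.1) ^ δ * ((2 : ℝ) ^ Q.1) ^ δ := by positivity
      nlinarith
    calc wt δ Q = a * volume (cube Q) := e1
      _ ≤ a * ∑' P, if P ∈ c then volume (cube P) else 0 := by gcongr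
      _ = ∑' P, a * (if P ∈ c then volume (cube P) else 0) := ENNReal.tsum_mul_left.symm
      _ ≤ _ := by
        refine ENNReal.tsum_le_tsum fun P => ?_
        split_ifs with hP
        · exact e2 P hP
        · simp

/-! ### packing -/

open scoped Classical in
def W (δ : ℝ) (S : Set (D n)) (P : D n) : ℝ≥0∞ := ∑' Q, if Q ∈ S ∧ R Q P then wt δ Q else 0

lemma exists_packing {δ : ℝ} (hδ : 0 < δ) (F : Set (D n)) :
    ∃ S ⊆ F, (∀ P, W δ S P ≤ 2 * wt δ P) ∧ ∀ Q ∈ F, ∃ P, R Q P ∧ wt δ P ≤ W δ S P := by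
  classical
  obtain ⟨S, -, hS⟩ := zorn_subset_nonempty {S : Set (D n) | S ⊆ F ∧ ∀ P, W δ S P ≤ 2 * wt δ P}
    (by
      intro c hc hchain hne
      refine ⟨⋃₀ c, ⟨sUnion_subset fun s hs => (hc hs).1, fun P => ?_⟩,
        fun s hs => subset_sUnion_of_mem hs⟩
      unfold W
      rw [ENNReal.tsum_eq_iSup_sum]
      refine iSup_le fun T => ?_
      obtain ⟨s, hs, hTs⟩ := DirectedOn.exists_mem_subset_of_finite_of_subset_sUnion
        (s := {Q | Q ∈ T ∧ Q ∈ ⋃₀ c}) hne hchain.directedOn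
        (T.finite_toSet.subset fun Q hQ => hQ.1) (fun Q hQ => hQ.2)
      refine le_trans ?_ ((hc hs).2 P)
      refine le_trans ?_ (ENNReal.sum_le_tsum T)
      refine Finset.sum_le_sum fun Q hQ => ?_
      by_cases h : Q ∈ ⋃₀ c ∧ R Q P
      · rw [if_pos h, if_pos ⟨hTs ⟨hQ, h.1⟩, h.2⟩]
      · rw [if_neg h]; exact zero_le)
    ∅ ⟨empty_subset _, fun P => by simp [W]⟩
  refine ⟨S, hS.prop.1, hS.prop.2, fun Q hQ => ?_⟩
  by_cases hQS : Q ∈ S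
  · refine ⟨Q, R_refl Q, ?_⟩
    refine le_trans ?_ (ENNReal.le_tsum Q)
    rw [if_pos ⟨hQS, R_refl Q⟩]
  · have hnot : ¬ (insert Q S ⊆ F ∧ ∀ P, W δ (insert Q S) P ≤ 2 * wt δ P) := by
      intro h
      exact hQS (hS.le_of_ge (y := insert Q S) h (subset_insert Q S) (mem_insert Q S))
    have : ∃ P, 2 * wt δ P < W δ (insert Q S) P := by
      by_contra hc
      push Not at hc
      exact hnot ⟨insert_subset hQ hS.prop.1, hc⟩
    obtain ⟨P, hP⟩ := this
    have hle : W δ (insert Q S) P ≤ W δ S P + if R Q P then wt δ Q else 0 := by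
      have e : (if R Q P then wt δ Q else 0) =
          ∑' Q', if Q' = Q then (if R Q' P then wt δ Q' else 0) else 0 :=
        (tsum_ite_eq Q (fun Q' => if R Q' P then wt δ Q' else 0)).symm
      rw [e]
      unfold W
      rw [← ENNReal.tsum_add]
      refine ENNReal.tsum_le_tsum fun Q' => ?_
      by_cases h1 : Q' = Q <;> by_cases h2 : R Q' P <;> by_cases h3 : Q' ∈ S <;>
        simp [h1, h2, h3]
    by_cases hR : R Q P
    · refine ⟨P, hR, ?_⟩
      rw [if_pos hR] at hle
      have h1 : 2 * wt δ P < W δ S P + wt δ P :=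
        hP.trans_le (hle.trans (by gcongr; exact wt_mono hδ hR.1))
      rw [two_mul] at h1
      exact (lt_of_add_lt_add_right h1).le
    · rw [if_neg hR, add_zero] at hle
      exact absurd (hP.trans_le hle) (not_lt.2 (hS.prop.2 P))

open scoped Classical in
lemma packing_sum {δ : ℝ} {S : Set (D n)} (hA : AC S) (hS : ∀ P, W δ S P ≤ 2 * wt δ P)
    (E : Set (En n)) : ∑' Q, (if Q ∈ S then H0 n δ (cube Q ∩ E) else 0) ≤ 3 * H0 n δ E := by
  rw [mul_comm, ← ENNReal.div_le_iff_le_mul (Or.inl (by simp)) (Or.inl (by simp))]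
  refine le_H0 fun c hc => ?_
  rw [ENNReal.div_le_iff_le_mul (Or.inl (by simp)) (Or.inl (by simp)), mul_comm,
    ← ENNReal.tsum_mul_left]
  calc ∑' Q, (if Q ∈ S then H0 n δ (cube Q ∩ E) else 0)
      ≤ ∑' Q, ∑' P, (if Q ∈ S ∧ P ∈ c then H0 n δ (cube Q ∩ cube P) else 0) := by
        refine ENNReal.tsum_le_tsum fun Q => ?_
        by_cases hQ : Q ∈ S
        · simp only [hQ, if_true, true_and]
          have : cube Q ∩ E ⊆ ⋃ P : D n, if P ∈ c then cube Q ∩ cube P else ∅ := by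
            rintro x ⟨hx1, hx2⟩
            obtain ⟨P, hP, hxP⟩ := mem_iUnion₂.1 (hc hx2)
            exact mem_iUnion.2 ⟨P, by rw [if_pos hP]; exact ⟨hx1, hxP⟩⟩
          refine (measure_mono this).trans ((measure_iUnion_le _).trans ?_)
          refine ENNReal.tsum_le_tsum fun P => ?_
          split_ifs <;> simp
        · simp [hQ]
    _ = ∑' P, ∑' Q, (if Q ∈ S ∧ P ∈ c then H0 n δ (cube Q ∩ cube P) else 0) := ENNReal.tsum_comm
    _ ≤ _ := by
        refine ENNReal.tsum_le_tsum fun P => ?_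
        by_cases hP : P ∈ c
        · simp only [hP, if_true, and_true]
          calc ∑' Q, (if Q ∈ S then H0 n δ (cube Q ∩ cube P) else 0)
              ≤ ∑' Q, ((if Q ∈ S ∧ R Q P then wt δ Q else 0) +
                  (if Q ∈ S ∧ R P Q then wt δ P else 0)) := by
                refine ENNReal.tsum_le_tsum fun Q => ?_
                by_cases hQ : Q ∈ S
                · simp only [hQ, if_true, true_and]
                  rcases trichotomy P Q with h | h | h
                  · rw [if_pos h]
                    exact ((measure_mono inter_subset_right).trans (H0_cube_le δ P)).trans
                      le_add_self
                  · rw [if_pos h]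
                    exact ((measure_mono inter_subset_left).trans (H0_cube_le δ Q)).trans
                      le_self_add
                  · rw [h]; simp
                · simp [hQ]
            _ = W δ S P + ∑' Q, (if Q ∈ S ∧ R P Q then wt δ P else 0) := ENNReal.tsum_add
            _ ≤ 2 * wt δ P + wt δ P := add_le_add (hS P) (hA.tsum_le P _)
            _ = 3 * wt δ P := by ring
        · simp [hP]

/-- Choquet integral w.r.t. `H0` -/
def J (δ : ℝ) (g : En n → ℝ) (Ω : Set (En n)) : ℝ≥0∞ :=
  ∫⁻ t in Ioi (0 : ℝ), H0 n δ (Ω ∩ {x | ENNReal.ofReal t < ENNReal.ofReal |g x|})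

lemma level_antitone (δ : ℝ) (g : En n → ℝ) (Ω : Set (En n)) :
    Antitone fun t : ℝ => H0 n δ (Ω ∩ {x | ENNReal.ofReal t < ENNReal.ofReal |g x|}) := by
  intro s t hst
  refine measure_mono (inter_subset_inter_right _ fun x hx => ?_)
  exact (ENNReal.ofReal_le_ofReal hst).trans_lt hx

lemma level_measurable (δ : ℝ) (g : En n → ℝ) (Ω : Set (En n)) :
    Measurable fun t : ℝ => H0 n δ (Ω ∩ {x | ENNReal.ofReal t < ENNReal.ofReal |g x|}) :=
  (level_antitone δ g Ω).measurable

lemma J_mono (δ : ℝ) (g : En n → ℝ) {Ω Ω' : Set (En n)} (h : Ω ⊆ Ω') : J δ g Ω ≤ J δ g Ω' :=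
  lintegral_mono fun _ => measure_mono (inter_subset_inter_left _ h)

lemma J_le_choquet (δ : ℝ) (g : En n → ℝ) (Ω : Set (En n)) :
    J δ g Ω ≤ choquetIntegralAbs n δ Ω g := lintegral_mono fun _ => H0_le_dyadic _ _

lemma choquet_le_J {δ : ℝ} (hδ : 0 < δ) (g : En n → ℝ) (Ω : Set (En n)) :
    choquetIntegralAbs n δ Ω g ≤ 3 ^ n * J δ g Ω := by
  unfold J
  rw [← lintegral_const_mul _ (level_measurable δ g Ω)]
  exact lintegral_mono fun _ => dyadic_le_H0 hδ _

lemma J_trip_le (δ : ℝ) (g : En n → ℝ) (Q : D n) :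
    J δ g (trip Q) ≤ ∑ v, J δ g (cube (nb Q v)) := by
  unfold J
  rw [← lintegral_finsetSum _ fun v _ => level_measurable δ g _]
  refine lintegral_mono fun t => ?_
  refine (measure_mono (inter_subset_inter_left _ (trip_subset Q))).trans ?_
  rw [iUnion_inter]
  exact measure_iUnion_fintype_le _ _

/-- Chebyshev -/
lemma chebyshev (δ : ℝ) (g : En n → ℝ) {s : ℝ} :
    ENNReal.ofReal s * H0 n δ {x | s < |g x|} ≤ J δ g univ := by
  calc ENNReal.ofReal s * H0 n δ {x | s < |g x|}
      = ∫⁻ t in Ioc (0 : ℝ) s, H0 n δ {x | s < |g x|} := by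
        rw [setLIntegral_const, Real.volume_Ioc, sub_zero, mul_comm]
    _ ≤ ∫⁻ t in Ioc (0 : ℝ) s,
          H0 n δ (univ ∩ {x | ENNReal.ofReal t < ENNReal.ofReal |g x|}) := by
        refine setLIntegral_mono (level_measurable δ g univ) fun t ht => measure_mono fun x hx => ?_
        refine ⟨trivial, ?_⟩
        have hx' : s < |g x| := hx
        exact (ENNReal.ofReal_lt_ofReal_iff (ht.1.trans (ht.2.trans_lt hx'))).2
          (ht.2.trans_lt hx')
    _ ≤ _ := lintegral_mono_set Ioc_subset_Ioi_self

lemma J_sub_le (δ : ℝ) (g : En n → ℝ) (Ω : Set (En n)) (a : ℝ) :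
    J δ (fun y => g y - a) Ω ≤ J δ g Ω + ENNReal.ofReal |a| * H0 n δ Ω := by
  set h : ℝ → ℝ≥0∞ := (Ioi (0 : ℝ)).indicator
    fun t => H0 n δ (Ω ∩ {x | ENNReal.ofReal t < ENNReal.ofReal |g x|}) with hh
  have hm : Measurable h := (level_measurable δ g Ω).indicator measurableSet_Ioi
  have e1 : J δ g Ω = ∫⁻ t, h (t - |a|) := by
    rw [lintegral_sub_right_eq_self h |a|, hh, lintegral_indicator measurableSet_Ioi, J]
  have e2 : ENNReal.ofReal |a| * H0 n δ Ω =
      ∫⁻ t, (Ioc (0 : ℝ) |a|).indicator (fun _ => H0 n δ Ω) t := by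
    rw [lintegral_indicator measurableSet_Ioc, setLIntegral_const, Real.volume_Ioc, sub_zero,
      mul_comm]
  have hm' : Measurable fun t => h (t - |a|) := hm.comp (measurable_id.sub_const _)
  rw [e1, e2, ← lintegral_add_left hm', J,
    ← lintegral_indicator measurableSet_Ioi]
  refine lintegral_mono fun t => ?_
  by_cases ht : 0 < t
  · rw [indicator_of_mem (show t ∈ Ioi (0 : ℝ) from ht)]
    by_cases hta : t ≤ |a|
    · rw [indicator_of_mem (show t ∈ Ioc (0 : ℝ) |a| from ⟨ht, hta⟩)]
      exact (measure_mono inter_subset_left).trans le_add_self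
    · push Not at hta
      refine le_trans ?_ le_self_add
      rw [hh, indicator_of_mem (show t - |a| ∈ Ioi (0 : ℝ) from sub_pos.2 hta)]
      refine measure_mono (inter_subset_inter_right _ fun x hx => ?_)
      have h1 : t < |g x - a| := (ENNReal.ofReal_lt_ofReal_iff_of_nonneg ht.le).1 hx
      have h2 : t - |a| < |g x| := by
        have := abs_sub (g x) a
        linarith
      exact (ENNReal.ofReal_lt_ofReal_iff_of_nonneg (sub_pos.2 hta).le).2 h2
  · rw [indicator_of_notMem (show t ∉ Ioi (0 : ℝ) from ht)]
    exact zero_le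

lemma packing_J {δ : ℝ} {S : Set (D n)} (hA : AC S) (hS : ∀ P, W δ S P ≤ 2 * wt δ P)
    (g : En n → ℝ) {b : ℝ≥0∞} (hb : ∀ Q ∈ S, b * wt δ Q ≤ J δ g (cube Q)) :
    b * (∑' Q, S.indicator (wt δ) Q) ≤ 3 * J δ g univ := by
  classical
  calc b * (∑' Q, S.indicator (wt δ) Q)
      = ∑' Q, b * S.indicator (wt δ) Q := ENNReal.tsum_mul_left.symm
    _ ≤ ∑' Q, ∫⁻ t in Ioi (0 : ℝ), (if Q ∈ S then
          H0 n δ (cube Q ∩ {x | ENNReal.ofReal t < ENNReal.ofReal |g x|}) else 0) := by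
        refine ENNReal.tsum_le_tsum fun Q => ?_
        by_cases hQ : Q ∈ S
        · simpa [hQ, J] using hb Q hQ
        · simp [hQ]
    _ = ∫⁻ t in Ioi (0 : ℝ), ∑' Q, (if Q ∈ S then
          H0 n δ (cube Q ∩ {x | ENNReal.ofReal t < ENNReal.ofReal |g x|}) else 0) := by
        rw [lintegral_tsum]
        intro Q
        by_cases hQ : Q ∈ S
        · simpa [hQ] using (level_measurable δ g (cube Q)).aemeasurable
        · simp [hQ]
    _ ≤ ∫⁻ t in Ioi (0 : ℝ), 3 *
          H0 n δ (univ ∩ {x | ENNReal.ofReal t < ENNReal.ofReal |g x|}) := by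
        refine lintegral_mono fun t => ?_
        rw [univ_inter]
        exact packing_sum hA hS _
    _ = 3 * J δ g univ := lintegral_const_mul _ (level_measurable δ g univ)

/-- the covering estimate -/
lemma weak_cubes {δ : ℝ} (hδ : 0 < δ) (g : En n → ℝ) (hg : J δ g univ ≠ ⊤) {b : ℝ≥0∞}
    (hb0 : b ≠ 0) (hbt : b ≠ ⊤) :
    b * H0 n δ (⋃ Q ∈ {Q : D n | b * wt δ Q ≤ J δ g (cube Q)}, trip Q) ≤
      3 * 3 ^ n * J δ g univ := by
  classical
  set F : Set (D n) := {Q : D n | b * wt δ Q ≤ J δ g (cube Q)} with hF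
  have hdiv : ∀ {x y : ℝ≥0∞}, b * x ≤ y → x ≤ y / b := by
    intro x y h
    rw [ENNReal.le_div_iff_mul_le (Or.inl hb0) (Or.inl hbt), mul_comm]; exact h
  obtain ⟨K, hK⟩ := exists_bound (n := n) hδ (A := J δ g univ / b) (ENNReal.div_ne_top hg hb0)
  have hFK : ∀ Q ∈ F, Q.1 ≤ K := fun Q hQ =>
    hK Q (hdiv (le_trans hQ (J_mono δ g (subset_univ _))))
  obtain ⟨S, hSF, hS, hcov⟩ := exists_packing hδ (maxs F)
  have hAC : AC S := fun P hP P' hP' h => AC_maxs F P (hSF hP) P' (hSF hP') h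
  have hsum := packing_J hAC hS g (b := b) (fun Q hQ => (hSF hQ).1)
  have hWS : ∀ P, W δ S P ≤ ∑' Q, S.indicator (wt δ) Q := by
    intro P
    refine ENNReal.tsum_le_tsum fun Q => ?_
    by_cases h : Q ∈ S
    · simp only [h, true_and, indicator_of_mem]; split_ifs <;> simp
    · simp [h]
  set G : Set (D n) := {P | wt δ P ≤ W δ S P} with hG
  obtain ⟨K', hK'⟩ := exists_bound (n := n) hδ (A := 3 * J δ g univ / b)
    (ENNReal.div_ne_top (ENNReal.mul_ne_top (by simp) hg) hb0)
  have hGK : ∀ P ∈ G, P.1 ≤ K' := fun P hP =>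
    hK' P ((le_trans hP (hWS P)).trans (hdiv hsum))
  have hcover : (⋃ Q ∈ F, trip Q) ⊆ ⋃ P : D n, if P ∈ maxs G then trip P else ∅ := by
    intro x hx
    obtain ⟨Q, hQ, hxQ⟩ := mem_iUnion₂.1 hx
    obtain ⟨Q', hQ', hR, hmax⟩ := exists_maximal hFK hQ
    obtain ⟨P, hRP, hP⟩ := hcov Q' ⟨hQ', hmax⟩
    obtain ⟨P', hP', hR', hmax'⟩ := exists_maximal hGK (show P ∈ G from hP)
    refine mem_iUnion.2 ⟨P', ?_⟩
    rw [if_pos ⟨hP', hmax'⟩]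
    exact R_trip (R_trans hR (R_trans hRP hR')) hxQ
  have hGsum : ∑' P, (if P ∈ maxs G then wt δ P else 0) ≤ ∑' Q, S.indicator (wt δ) Q := by
    calc ∑' P, (if P ∈ maxs G then wt δ P else 0)
        ≤ ∑' P, ∑' Q, (if P ∈ maxs G ∧ R Q P then S.indicator (wt δ) Q else 0) := by
          refine ENNReal.tsum_le_tsum fun P => ?_
          by_cases h : P ∈ maxs G
          · simp only [h, if_true, true_and]
            refine le_trans h.1 (ENNReal.tsum_le_tsum fun Q => ?_)
            by_cases h1 : Q ∈ S <;> by_cases h2 : R Q P <;> simp [h1, h2]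
          · simp [h]
      _ = ∑' Q, ∑' P, (if P ∈ maxs G ∧ R Q P then S.indicator (wt δ) Q else 0) :=
          ENNReal.tsum_comm
      _ ≤ _ := ENNReal.tsum_le_tsum fun Q => (AC_maxs G).tsum_le Q _
  calc b * H0 n δ (⋃ Q ∈ F, trip Q)
      ≤ b * ∑' P, (3 ^ n) * (if P ∈ maxs G then wt δ P else 0) := by
        gcongr
        refine (measure_mono hcover).trans ((measure_iUnion_le _).trans ?_)
        refine ENNReal.tsum_le_tsum fun P => ?_
        split_ifs
        · exact H0_trip_le δ P
        · simp
    _ = 3 ^ n * (b * ∑' P, (if P ∈ maxs G then wt δ P else 0)) := by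
        rw [ENNReal.tsum_mul_left]; ring
    _ ≤ 3 ^ n * (3 * J δ g univ) := by
        refine mul_le_mul_right ?_ _
        exact le_trans (mul_le_mul_right hGsum b) hsum
    _ = _ := by ring

lemma ball_subset_trip {x : En n} {r : ℝ} {k : ℤ} (hr : r ≤ 2 ^ k) :
    ball x r ⊆ trip (anc k x) := by
  intro y hy i
  have h1 := mem_anc k x i
  have h2 : |y i - x i| < r := by
    have := PiLp.norm_apply_le (y - x) i
    rw [mem_ball, dist_eq_norm] at hy
    simp only [PiLp.sub_apply, Real.norm_eq_abs] at this
    exact this.trans_lt hy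
  have h3 := abs_lt.1 h2
  simp only [anc] at h1 ⊢
  constructor <;> nlinarith [h1.1, h1.2]

lemma cube_subset_ball {x : En n} {r : ℝ} {j : ℤ} (hr : 2 ^ j < r) :
    cube (anc (j - n) x) ⊆ ball x r := by
  intro y hy
  have h1 := mem_anc (j - n) x
  have h2 : ∀ i, |y i - x i| ≤ 2 ^ (j - n) := by
    intro i
    have a := h1 i
    have b := hy i
    simp only [anc] at a b
    rw [abs_le]
    constructor <;> linarith [a.1, a.2, b.1, b.2]
  have hp := two_zpow_pos (j - n)
  rw [mem_ball, dist_eq_norm]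
  have h3 : ‖y - x‖ ^ 2 ≤ (n * 2 ^ (j - n)) ^ 2 := by
    rw [EuclideanSpace.norm_sq_eq]
    calc ∑ i, ‖(y - x).ofLp i‖ ^ 2 ≤ ∑ i : Fin n, ((2 : ℝ) ^ (j - n)) ^ 2 := by
          refine Finset.sum_le_sum fun i _ => ?_
          gcongr
          simpa using h2 i
      _ = n * ((2 : ℝ) ^ (j - n)) ^ 2 := by simp
      _ ≤ (n * 2 ^ (j - n)) ^ 2 := by
          rw [mul_pow]
          gcongr
          have : n ≤ n ^ 2 := Nat.le_self_pow (by norm_num) n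
          exact_mod_cast this
  have h4 : ‖y - x‖ ≤ n * 2 ^ (j - n) := le_of_sq_le_sq h3 (by positivity)
  have h5 : (n : ℝ) * 2 ^ (j - n) ≤ 2 ^ j := by
    have : (n : ℝ) ≤ 2 ^ n := by exact_mod_cast Nat.lt_two_pow_self.le
    calc (n : ℝ) * 2 ^ (j - n) ≤ 2 ^ n * 2 ^ (j - n) := by gcongr
      _ = 2 ^ j := by
        rw [← zpow_natCast, ← zpow_add₀ (by norm_num)]; congr 1; ring
  linarith

lemma wt_shift (δ : ℝ) (j : ℤ) (x : En n) :
    wt δ (anc (j - n) x) =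
      ENNReal.ofReal (((2 : ℝ) ^ (-((n : ℤ) + 1))) ^ δ) * wt δ (anc (j + 1) x) := by
  simp only [wt, anc]
  rw [← ENNReal.ofReal_mul (by positivity), ← Real.mul_rpow (by positivity) (by positivity),
    ← zpow_add₀ (by norm_num)]
  congr 3
  ring

lemma pointwise {δ : ℝ} (hδ : 0 < δ) (hn : δ ≤ n) (f : En n → ℝ) {s : ℝ} (hs : 0 < s) {x : En n}
    (hx : ENNReal.ofReal (s * 2 * 3 ^ n) < lebDev n δ f x) (hfx : |f x| ≤ s) :
    ∃ Q : D n, ENNReal.ofReal (s * ((2 : ℝ) ^ (-((n : ℤ) + 1))) ^ δ / 3 ^ n) * wt δ Q ≤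
      J δ f (cube Q) ∧ x ∈ trip Q := by
  obtain ⟨r, hr0, hr⟩ : ∃ r : ℝ, 0 < r ∧ ENNReal.ofReal (s * 2 * 3 ^ n) <
      choquetIntegralAbs n δ (ball x r) (fun y => f y - f x) / dyadicContent n δ (ball x r) := by
    have h1 := frequently_lt_of_lt_limsup (by isBoundedDefault) hx
    obtain ⟨r, h2, h3⟩ := (h1.and_eventually self_mem_nhdsWithin).exists
    exact ⟨r, h3, h2⟩
  obtain ⟨j, hj1, hj2⟩ := exists_mem_Ioc_zpow (y := (2 : ℝ)) hr0 (by norm_num)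
  set B := ball x r with hB
  have hBt := ball_subset_trip (x := x) hj2
  have h0B : H0 n δ B ≤ 3 ^ n * wt δ (anc (j + 1) x) := (measure_mono hBt).trans (H0_trip_le δ _)
  have hfin : dyadicContent n δ B ≠ ⊤ := by
    refine ne_top_of_le_ne_top ?_ ((dyadic_le_H0 hδ B).trans (mul_le_mul_right h0B _))
    have := wt_ne_top δ (anc (j + 1) x)
    finiteness
  have h1 := ENNReal.mul_lt_of_lt_div hr
  have h2 : choquetIntegralAbs n δ B (fun y => f y - f x) ≤
      3 ^ n * (J δ f B + ENNReal.ofReal s * dyadicContent n δ B) := by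
    refine (choquet_le_J hδ _ _).trans (mul_le_mul_right ((J_sub_le δ f B (f x)).trans ?_) _)
    refine add_le_add le_rfl (mul_le_mul' (ENNReal.ofReal_le_ofReal hfx) (H0_le_dyadic _ _))
  have e3 : ENNReal.ofReal (3 ^ n) = 3 ^ n := by
    rw [ENNReal.ofReal_pow (by norm_num)]; norm_num
  have h3 : ENNReal.ofReal s * dyadicContent n δ B < J δ f B := by
    have h4 := h1.trans_le h2
    rw [show s * 2 * 3 ^ n = 3 ^ n * (s + s) by ring, ENNReal.ofReal_mul (by positivity), e3,
      ENNReal.ofReal_add hs.le hs.le, mul_assoc, add_mul] at h4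
    have h5 := lt_of_mul_lt_mul_left' h4
    exact lt_of_add_lt_add_right h5
  have hlow : wt δ (anc (j - n) x) ≤ dyadicContent n δ B :=
    ((wt_le_H0 hδ hn _).trans (measure_mono (cube_subset_ball hj1))).trans (H0_le_dyadic _ _)
  rw [wt_shift] at hlow
  by_contra hcon
  push Not at hcon
  have hall : ∀ v, J δ f (cube (nb (anc (j + 1) x) v)) ≤
      ENNReal.ofReal (s * ((2 : ℝ) ^ (-((n : ℤ) + 1))) ^ δ / 3 ^ n) * wt δ (anc (j + 1) x) := by
    intro v
    by_contra hc
    exact hcon _ (not_le.1 hc).le (mem_trip_nb (mem_anc _ _) v)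
  have hup : J δ f B ≤ ENNReal.ofReal s * dyadicContent n δ B := by
    calc J δ f B ≤ ∑ v, J δ f (cube (nb (anc (j + 1) x) v)) :=
          (J_mono δ f hBt).trans (J_trip_le δ f _)
      _ ≤ ∑ _v : Fin n → Fin 3, ENNReal.ofReal (s * ((2 : ℝ) ^ (-((n : ℤ) + 1))) ^ δ / 3 ^ n) *
            wt δ (anc (j + 1) x) := Finset.sum_le_sum fun v _ => hall v
      _ = ENNReal.ofReal s * (ENNReal.ofReal (((2 : ℝ) ^ (-((n : ℤ) + 1))) ^ δ) *
            wt δ (anc (j + 1) x)) := by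
          rw [Finset.sum_const, nsmul_eq_mul, ← mul_assoc, ← mul_assoc,
            ← ENNReal.ofReal_mul hs.le]
          congr 1
          rw [Finset.card_univ, Fintype.card_fun, Fintype.card_fin, Fintype.card_fin,
            Nat.cast_pow, Nat.cast_ofNat, ← e3, ← ENNReal.ofReal_mul (by positivity)]
          congr 1
          field_simp
      _ ≤ _ := by gcongr
  exact absurd h3 (not_lt.2 hup)

end LebDev

/-- weak-type estimate for `f ↦ f^δ_*` on `nL¹(ℝⁿ, H̃^δ_∞)`. -/
theorem lebDev_weak_type (n : ℕ) (hn : 1 ≤ n) (δ : ℝ) (hδ0 : 0 < δ) (hδn : δ ≤ n) :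
    ∃ c : ℝ, 0 < c ∧ ∀ f : En n → ℝ, choquetIntegralAbs n δ univ f < ⊤ →
      ∀ lam : ℝ, 0 < lam →
        dyadicContent n δ {x | ENNReal.ofReal lam < lebDev n δ f x} ≤
          ENNReal.ofReal (c / lam) * choquetIntegralAbs n δ univ f := by
  set ρ : ℝ := ((2 : ℝ) ^ (-((n : ℤ) + 1))) ^ δ with hρ
  have hρ0 : 0 < ρ := by positivity
  refine ⟨2 * 9 ^ n * (1 + 3 * 9 ^ n / ρ), by positivity, fun f hf lam hlam => ?_⟩
  set s : ℝ := lam / (2 * 3 ^ n) with hs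
  have hs0 : 0 < s := by positivity
  have hls : lam = s * 2 * 3 ^ n := by rw [hs]; field_simp
  set b : ℝ := s * ρ / 3 ^ n with hb
  have hb0 : 0 < b := by positivity
  have hJ := LebDev.J_le_choquet δ f univ
  have hJt : LebDev.J δ f univ ≠ ⊤ := (hJ.trans_lt hf).ne
  have e3 : ENNReal.ofReal (3 ^ n) = 3 ^ n := by
    rw [ENNReal.ofReal_pow (by norm_num)]; norm_num
  have e33 : ENNReal.ofReal (3 * 3 ^ n) = 3 * 3 ^ n := by
    rw [ENNReal.ofReal_mul (by norm_num), e3]; norm_num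
  set V := ⋃ Q ∈ {Q : LebDev.D n | ENNReal.ofReal b * LebDev.wt δ Q ≤
    LebDev.J δ f (LebDev.cube Q)}, LebDev.trip Q with hV
  have hsub : {x | ENNReal.ofReal lam < lebDev n δ f x} ⊆ {x | s < |f x|} ∪ V := by
    intro x hx
    by_cases hfx : s < |f x|
    · exact Or.inl hfx
    · right
      rw [mem_setOf_eq, hls] at hx
      obtain ⟨Q, hQ, hxQ⟩ := LebDev.pointwise hδ0 hδn f hs0 hx (not_lt.1 hfx)
      exact mem_iUnion₂.2 ⟨Q, hQ, hxQ⟩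
  have c1 := LebDev.chebyshev δ f (s := s)
  have c2 := LebDev.weak_cubes hδ0 f hJt (b := ENNReal.ofReal b) (by simpa using hb0)
    ENNReal.ofReal_ne_top
  have inv : ∀ {a : ℝ} (_ : 0 < a) {x y : ℝ≥0∞}, ENNReal.ofReal a * x ≤ y →
      x ≤ ENNReal.ofReal a⁻¹ * y := by
    intro a ha x y h
    calc x = ENNReal.ofReal a⁻¹ * (ENNReal.ofReal a * x) := by
          rw [← mul_assoc, ← ENNReal.ofReal_mul (by positivity), inv_mul_cancel₀ ha.ne']; simp
      _ ≤ _ := by gcongr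
  have d1 := inv hs0 c1
  have d2 := inv hb0 c2
  calc dyadicContent n δ {x | ENNReal.ofReal lam < lebDev n δ f x}
      ≤ 3 ^ n * LebDev.H0 n δ {x | ENNReal.ofReal lam < lebDev n δ f x} :=
        LebDev.dyadic_le_H0 hδ0 _
    _ ≤ 3 ^ n * (LebDev.H0 n δ {x | s < |f x|} + LebDev.H0 n δ V) :=
        mul_le_mul_right ((measure_mono hsub).trans (measure_union_le _ _)) _
    _ ≤ 3 ^ n * (ENNReal.ofReal s⁻¹ * LebDev.J δ f univ +
          ENNReal.ofReal b⁻¹ * (3 * 3 ^ n * LebDev.J δ f univ)) :=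
        mul_le_mul_right (add_le_add d1 d2) _
    _ = ENNReal.ofReal (2 * 9 ^ n * (1 + 3 * 9 ^ n / ρ) / lam) * LebDev.J δ f univ := by
        rw [← e33, ← mul_assoc (ENNReal.ofReal b⁻¹), ← add_mul, ← mul_assoc, ← e3,
          ← ENNReal.ofReal_mul (by positivity), ← ENNReal.ofReal_add (by positivity)
          (by positivity), ← ENNReal.ofReal_mul (by positivity)]
        congr 2
        rw [hb, hs, show (9 : ℝ) ^ n = 3 ^ n * 3 ^ n by rw [← mul_pow]; norm_num]
        field_simp
    _ ≤ _ := by gcongr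
end
end
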